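/- Proposition 2 (TDMA, finite peak power). Consider Problem (P1') with peak power P_peak > 0. Let (α₀, α₁, …, α_K, s₀, …, s_K, m₁, …, m_K) be any feasible point with 0 < α₀ < 1 and 0 < s₀ < α₀ P_peak (i.e., WPT power p₀ = s₀/α₀ strictly below P_peak). Set α̃₀ = s₀/P_peak and t = (1 − α̃₀)/(1 − α₀) ≥ 1. Then the point (α̃₀, t α₁, …, t α_K, s₀, …, s_K, m₁, …, m_K) is feasible, satisfies s₀ = α̃₀ P_peak (i.e., WPT power equal to P_peak), and its sum-rate is greater than or equal to the sum-rate of the original point. Hence the maximum sum-rate of Problem (P1') is achieved with p₀* = P_peak. -/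

import Mathlib

open Finset

/-- Per-pair decode-and-forward rate in Problem (P1') (TDMA, energy variables):
time fraction `a`, source transmit energy `mk` (first-hop gain `h1k`), relay transmit
energy `sk` (second-hop gain `h2k`), noise power `σ²`; the rate is `0` when `a = 0`. -/
noncomputable def tdmaRate (σ a mk h1k sk h2k : ℝ) : ℝ :=
  if a = 0 then 0
  else (a / 2) * min (Real.logb 2 (1 + 2 * mk * h1k / (a * σ ^ 2)))
                     (Real.logb 2 (1 + 2 * sk * h2k / (a * σ ^ 2)))

/-!
For `c ≥ 0` the perspective `a ↦ a * log (1 + c / a)` is nondecreasing on `[0, ∞)` by Bernoulli's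
inequality, so stretching an information slot at fixed transmit energies never lowers its rate.
Delivering the energy `s₀` at peak power shortens the power-transfer slot, and the time saved can
be shared among the information slots in proportion to their lengths.
-/

theorem logb_one_add_mul_le_mul_logb_one_add {b t x : ℝ} (hb : 1 < b) (ht : 1 ≤ t)
    (htx : -1 < t * x) :
    Real.logb b (1 + t * x) ≤ t * Real.logb b (1 + x) := by
  have hx : -1 < x := by
    by_contra! hx
    nlinarith
  have bernoulli : 1 + t * x ≤ (1 + x) ^ t := one_add_mul_self_le_rpow_one_add hx.le ht
  calc
    Real.logb b (1 + t * x) ≤ Real.logb b ((1 + x) ^ t) :=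
      Real.logb_le_logb_of_le hb (by linarith) bernoulli
    _ = t * Real.logb b (1 + x) := Real.logb_rpow_eq_mul_logb_of_pos (by linarith)

/- The endpoint `a = 0` is included: there Lean's `c / 0 = 0` gives the value `0`, which is also the
limit as `a → 0`. -/
theorem monotoneOn_mul_logb_one_add_div {b c : ℝ} (hb : 1 < b) (hc : 0 ≤ c) :
    MonotoneOn (fun a : ℝ => a * Real.logb b (1 + c / a)) (Set.Ici 0) := by
  intro a ha a' ha' haa'
  rcases (Set.mem_Ici.mp ha).eq_or_lt with rfl | ha_pos
  · have hlog : 0 ≤ Real.logb b (1 + c / a') :=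
      Real.logb_nonneg hb (le_add_of_nonneg_right (div_nonneg hc ha'))
    simpa only [zero_mul] using mul_nonneg ha' hlog
  · have ha'_pos : 0 < a' := ha_pos.trans_le haa'
    have hscale : a' / a * (c / a') = c / a := by field_simp
    have hlog : Real.logb b (1 + c / a) ≤ a' / a * Real.logb b (1 + c / a') := by
      rw [← hscale]
      refine logb_one_add_mul_le_mul_logb_one_add hb ((one_le_div ha_pos).mpr haa') ?_
      exact neg_one_lt_zero.trans_le (by positivity)
    calc
      a * Real.logb b (1 + c / a) ≤ a * (a' / a * Real.logb b (1 + c / a')) :=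
        mul_le_mul_of_nonneg_left hlog ha_pos.le
      _ = a' * Real.logb b (1 + c / a') := by field_simp

theorem tdmaRate_eq_min_div_two {a : ℝ} (ha : 0 ≤ a) (σ m h₁ s h₂ : ℝ) :
    tdmaRate σ a m h₁ s h₂ =
      min (a * Real.logb 2 (1 + 2 * m * h₁ / σ ^ 2 / a))
        (a * Real.logb 2 (1 + 2 * s * h₂ / σ ^ 2 / a)) / 2 := by
  rw [tdmaRate, ← mul_min_of_nonneg _ _ ha]
  split_ifs with ha_zero
  · simp only [ha_zero, zero_mul, zero_div]
  · simp only [div_div, mul_comm a (σ ^ 2)]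
    ring

theorem monotoneOn_tdmaRate {m h₁ s h₂ : ℝ} (σ : ℝ) (hmh : 0 ≤ m * h₁) (hsh : 0 ≤ s * h₂) :
    MonotoneOn (fun a => tdmaRate σ a m h₁ s h₂) (Set.Ici 0) := by
  have hop {e h : ℝ} (heh : 0 ≤ e * h) :
      MonotoneOn (fun a : ℝ => a * Real.logb 2 (1 + 2 * e * h / σ ^ 2 / a)) (Set.Ici 0) :=
    monotoneOn_mul_logb_one_add_div one_lt_two (by rw [mul_assoc]; positivity)
  intro a ha a' ha' haa'
  simp only [tdmaRate_eq_min_div_two ha, tdmaRate_eq_min_div_two ha']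
  exact div_le_div_of_nonneg_right ((hop hmh).min (hop hsh) ha ha' haa') zero_le_two

theorem add_sum_div_mul_le_one {ι : Type*} (S : Finset ι) {α : ι → ℝ} {α₀ α₀' : ℝ}
    (hα₀ : α₀ < 1) (hα₀' : α₀' ≤ 1) (htime : α₀ + ∑ k ∈ S, α k ≤ 1) :
    α₀' + ∑ k ∈ S, (1 - α₀') / (1 - α₀) * α k ≤ 1 := by
  have hrem : 0 < 1 - α₀ := sub_pos.mpr hα₀
  calc
    α₀' + ∑ k ∈ S, (1 - α₀') / (1 - α₀) * α k
        = α₀' + (1 - α₀') / (1 - α₀) * ∑ k ∈ S, α k := by rw [mul_sum]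
    _ ≤ α₀' + (1 - α₀') / (1 - α₀) * (1 - α₀) := by
      have hstretch : 0 ≤ (1 - α₀') / (1 - α₀) := div_nonneg (sub_nonneg.mpr hα₀') hrem.le
      have htail : ∑ k ∈ S, α k ≤ 1 - α₀ := le_sub_iff_add_le'.mpr htime
      exact add_le_add_right (mul_le_mul_of_nonneg_left htail hstretch) α₀'
    _ = 1 := by rw [div_mul_cancel₀ _ hrem.ne', add_sub_cancel]

theorem stmt_11_general {ι : Type*} [Fintype ι] {σ Ppeak : ℝ} (_hσ : 0 < σ) (hPpeak : 0 < Ppeak)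
    {h1 h2 : ι → ℝ} (hh1 : ∀ k, 0 ≤ h1 k) (hh2 : ∀ k, 0 ≤ h2 k)
    {α₀ s₀ : ℝ} {α s m : ι → ℝ} (hα₀lt1 : α₀ < 1)
    (hαnn : ∀ k, 0 ≤ α k) (htime : α₀ + ∑ k, α k ≤ 1)
    (hs₀pos : 0 < s₀) (hs : ∀ k, 0 ≤ s k)
    (hs₀peak : s₀ ≤ α₀ * Ppeak) (hspeak : ∀ k, s k ≤ (α k / 2) * Ppeak)
    (hm : ∀ k, 0 ≤ m k) :
    let α₀' : ℝ := s₀ / Ppeak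
    let t : ℝ := (1 - α₀') / (1 - α₀)
    1 ≤ t ∧ 0 < α₀' ∧ s₀ = α₀' * Ppeak ∧
    (∀ k, 0 ≤ t * α k) ∧ α₀' + ∑ k, t * α k ≤ 1 ∧
    (∀ k, s k ≤ (t * α k / 2) * Ppeak) ∧
    (∑ k, tdmaRate σ (α k) (m k) (h1 k) (s k) (h2 k)) ≤
      ∑ k, tdmaRate σ (t * α k) (m k) (h1 k) (s k) (h2 k) := by
  intro α₀' t
  have hα₀' : α₀' ≤ α₀ := (div_le_iff₀ hPpeak).mpr hs₀peak
  have ht : 1 ≤ t := (one_le_div (sub_pos.mpr hα₀lt1)).mpr (sub_le_sub_left hα₀' 1)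
  have hstretch (k : ι) : α k ≤ t * α k := le_mul_of_one_le_left (hαnn k) ht
  have hstretch_nonneg (k : ι) : 0 ≤ t * α k := (hαnn k).trans (hstretch k)
  have hpeak (k : ι) : s k ≤ (t * α k / 2) * Ppeak :=
    (hspeak k).trans (by gcongr; exact hstretch k)
  have hrate (k : ι) : tdmaRate σ (α k) (m k) (h1 k) (s k) (h2 k) ≤
      tdmaRate σ (t * α k) (m k) (h1 k) (s k) (h2 k) :=
    monotoneOn_tdmaRate σ (mul_nonneg (hm k) (hh1 k)) (mul_nonneg (hs k) (hh2 k))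
      (hαnn k) (hstretch_nonneg k) (hstretch k)
  exact ⟨ht, div_pos hs₀pos hPpeak, (div_mul_cancel₀ s₀ hPpeak.ne').symm, hstretch_nonneg,
    add_sum_div_mul_le_one univ hα₀lt1 (hα₀'.trans hα₀lt1.le) htime, hpeak,
    sum_le_sum fun k _ => hrate k⟩

/-- Proposition 2 (TDMA, finite peak power).  For any feasible point of Problem (P1') with
peak power `P_peak` such that `0 < α₀ < 1` and `0 < s₀ < α₀ P_peak`, setting
`α̃₀ = s₀/P_peak` and `t = (1 − α̃₀)/(1 − α₀) ≥ 1`, the point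
`(α̃₀, t α₁, …, t α_K, s, m)` is feasible, uses WPT power exactly `P_peak`
(i.e. `s₀ = α̃₀ P_peak`), and its sum-rate is at least the original one; hence the
maximum sum-rate is achieved with `p₀* = P_peak`. -/
theorem stmt_11
    (K : ℕ) (hK : 1 ≤ K) (σ η P Ppeak : ℝ) (hσ : 0 < σ) (hη0 : 0 < η) (hη1 : η < 1)
    (hP : 0 < P) (hPpeak : 0 < Ppeak)
    (gr : Fin K → ℝ) (hgr : ∀ k, 0 < gr k)
    (g : Fin K → Fin K → ℝ) (hg : ∀ i k, 0 ≤ g i k)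
    (h1 h2 : Fin K → ℝ) (hh1 : ∀ k, 0 < h1 k) (hh2 : ∀ k, 0 < h2 k)
    (Ec : Fin K → ℝ) (hEc : ∀ k, 0 ≤ Ec k)
    -- a feasible point of Problem (P1') with peak power constraints
    (α₀ : ℝ) (α : Fin K → ℝ) (s₀ : ℝ) (s m : Fin K → ℝ)
    (hα₀pos : 0 < α₀) (hα₀lt1 : α₀ < 1)
    (hαnn : ∀ k, 0 ≤ α k) (htime : α₀ + ∑ k, α k ≤ 1)
    (hs₀pos : 0 < s₀) (hs : ∀ k, 0 ≤ s k) (henergy : s₀ + ∑ k, s k ≤ P)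
    (hs₀peak : s₀ < α₀ * Ppeak) (hspeak : ∀ k, s k ≤ (α k / 2) * Ppeak)
    (hm : ∀ k, 0 ≤ m k)
    (hcaus : ∀ k, m k + Ec k ≤
      η * ((s₀ + ∑ i ∈ univ.filter (fun i => i < k), s i) * gr k
            + ∑ i ∈ univ.filter (fun i => i < k), m i * g i k)) :
    let α₀' : ℝ := s₀ / Ppeak
    let t : ℝ := (1 - α₀') / (1 - α₀)
    -- `t ≥ 1`, the new point uses full peak power for WPT, and is feasible
    1 ≤ t ∧ 0 < α₀' ∧ s₀ = α₀' * Ppeak ∧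
    (∀ k, 0 ≤ t * α k) ∧ α₀' + ∑ k, t * α k ≤ 1 ∧
    (∀ k, s k ≤ (t * α k / 2) * Ppeak) ∧
    -- the sum-rate does not decrease
    (∑ k, tdmaRate σ (α k) (m k) (h1 k) (s k) (h2 k)) ≤
      ∑ k, tdmaRate σ (t * α k) (m k) (h1 k) (s k) (h2 k) :=
  stmt_11_general hσ hPpeak (fun k => (hh1 k).le) (fun k => (hh2 k).le) hα₀lt1 hαnn htime
    hs₀pos hs hs₀peak.le hspeak hm
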